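/- (Closed form for bumpered billiard tables B1(5,n), even case.) For every even n ≥ 4 and all signs e ∈ {1,-1}^(2n-2): BT_n(e₁,…,e_{2n-2}) = g₂(e₁,e₂)·∏_{m=1}^{(n-2)/2} N(e_{4m-1},e_{4m},e_{4m+1},e_{4m+2}) + Σ_{i=0}^{(n-4)/2} H_{n-1-2i}(e₁,…,e_{2n-4-4i})·X(e_{2n-3-4i},e_{2n-2-4i})·∏_{m=1}^{i} N(e_{2n-1-4i+4(m-1)},e_{2n-4i+4(m-1)},e_{2n+1-4i+4(m-1)},e_{2n+2-4i+4(m-1)}) + Σ_{i=0}^{(n-4)/2} H_{n-2-2i}(e₁,…,e_{2n-6-4i})·R(e_{2n-5-4i},e_{2n-4-4i},e_{2n-3-4i},e_{2n-2-4i})·∏_{m=1}^{i} N(e_{2n-1-4i+4(m-1)},e_{2n-4i+4(m-1)},e_{2n+1-4i+4(m-1)},e_{2n+2-4i+4(m-1)}). -/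

import Mathlib

/-!
Group the crossings of an even table after the first two into blocks of four,
`e (4k+3), …, e (4k+6)`. Adding block `k` changes the bracket by
`BT (2k+4) = (H (2k+3) * X + H (2k+2) * R) + BT (2k+2) * N`, and the separately listed `BT 4` obeys
this rule too, with `BT 2 = g₂` as initial value. This is a first-order linear recurrence in `k`,
and the closed form is its unrolled solution, with the blocks listed from the last one backwards.
-/

open LaurentPolynomial Finset

noncomputable section

/-- The ring `ℤ[A, A⁻¹]` of Laurent polynomials over `ℤ`; the variable `A` is
`LaurentPolynomial.T 1`, and `A^n = T n` for `n : ℤ`. -/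
abbrev KR : Type := LaurentPolynomial ℤ

/-- `a ε = A^ε`. -/
def Ca (ε : ℤ) : KR := T ε

/-- `f₂ ε = -A^(-3ε)`. -/
def Cf₂ (ε : ℤ) : KR := -T (-3 * ε)

/-- `δ = -A² - A⁻²`. -/
def Cδ : KR := -T 2 - T (-2)

/-- `X(α,β) = δ·a(α)a(β) + a(α)a(-β) + a(-α)a(β)`. -/
def CX (α β : ℤ) : KR := Cδ * Ca α * Ca β + Ca α * Ca (-β) + Ca (-α) * Ca β

/-- `g₂(α,β) = X(α,β) + δ·a(-α)a(-β)`, the Kauffman bracket of `T(4,2)`. -/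
def Cg₂ (α β : ℤ) : KR := CX α β + Cδ * Ca (-α) * Ca (-β)

/-- `K(α,β,γ,η) = f₂(-α)f₂(-β)a(-γ)a(-η)`. -/
def CK (α β γ η : ℤ) : KR := Cf₂ (-α) * Cf₂ (-β) * Ca (-γ) * Ca (-η)

/-- `N(α,β,γ,η) = f₂(-α)a(-β)a(-γ)a(-η)`. -/
def CN (α β γ η : ℤ) : KR := Cf₂ (-α) * Ca (-β) * Ca (-γ) * Ca (-η)

/-- `Ñ(α,β,γ,η) = a(-α)f₂(-β)a(-γ)a(-η)`. -/
def CNt (α β γ η : ℤ) : KR := Ca (-α) * Cf₂ (-β) * Ca (-γ) * Ca (-η)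

/-- `R(α,β,γ,η) = f₂(-α)a(β)a(-γ)a(-η)`. -/
def CR (α β γ η : ℤ) : KR := Cf₂ (-α) * Ca β * Ca (-γ) * Ca (-η)

/-- `R̃(α,β,γ,η) = a(α)f₂(-β)a(-γ)a(-η)`. -/
def CRt (α β γ η : ℤ) : KR := Ca α * Cf₂ (-β) * Ca (-γ) * Ca (-η)

/-- `S(α,β,γ,η) = f₂(α)f₂(-β)a(-γ)a(-η)`. -/
def CS (α β γ η : ℤ) : KR := Cf₂ α * Cf₂ (-β) * Ca (-γ) * Ca (-η)

/-- `L(α,β,γ) = f₂(-α)a(β)a(-γ)`. -/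
def CL (α β γ : ℤ) : KR := Cf₂ (-α) * Ca β * Ca (-γ)

/-- `M(α,β,γ) = f₂(-α)f₂(β)a(-γ)`. -/
def CM (α β γ : ℤ) : KR := Cf₂ (-α) * Cf₂ β * Ca (-γ)

mutual
  /-- `H n e` is the Kauffman bracket of the Chebyshev billiard table diagram `T(5,n)`
  with crossing signs `e 1, …, e (2n-2)`. -/
  def Hb : ℕ → (ℕ → ℤ) → KR
    | 0, _ => 1
    | 1, _ => 1
    | 2, e =>
        Ca (e 1) * Ca (e 2) + Cδ * Ca (e 1) * Ca (-e 2) + Cδ * Ca (-e 1) * Ca (e 2)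
          + Cδ ^ 2 * Ca (-e 1) * Ca (-e 2)
    | m + 3, e =>
        Hb (m + 2) e * Ca (e (2 * m + 3)) * Ca (e (2 * m + 4))
          + Hb (m + 1) e * CK (e (2 * m + 1)) (e (2 * m + 2)) (e (2 * m + 3)) (e (2 * m + 4))
          + if (m + 3) % 2 = 1 then
              BTb (m + 2) e * Ca (e (2 * m + 3)) * Ca (-e (2 * m + 4))
                + Bb (m + 2) (Function.update e (2 * m + 1) (e (2 * m + 2)))
                    * Cf₂ (-e (2 * m + 1)) * Ca (-e (2 * m + 3)) * Ca (e (2 * m + 4))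
            else
              BTb (m + 2) e * Ca (-e (2 * m + 3)) * Ca (e (2 * m + 4))
                + Bb (m + 2) e * Cf₂ (-e (2 * m + 2)) * Ca (e (2 * m + 3)) * Ca (-e (2 * m + 4))
  termination_by n _ => n

  /-- `B n e` is the Kauffman bracket of the bumpered billiard table `B2(5,n)` with
  crossing signs `e 1, …, e (2n-3)`. -/
  def Bb : ℕ → (ℕ → ℤ) → KR
    | 0, _ => 1
    | 1, _ => 1
    | 2, e => Cf₂ (e 1)
    | m + 3, e =>
        Hb (m + 2) e * Ca (e (2 * m + 3))
          + if (m + 3) % 2 = 1 then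
              Bb (m + 2) (Function.update e (2 * m + 1) (e (2 * m + 2)))
                * Cf₂ (-e (2 * m + 1)) * Ca (-e (2 * m + 3))
            else
              Bb (m + 2) e * Cf₂ (-e (2 * m + 2)) * Ca (-e (2 * m + 3))
  termination_by n _ => n

  /-- `BT n e` is the Kauffman bracket of the bumpered billiard table `B1(5,n)` with its
  crossingless tangle closure, with crossing signs `e 1, …, e (2n-2)`. -/
  def BTb : ℕ → (ℕ → ℤ) → KR
    | 0, _ => 1
    | 1, _ => 1
    | 2, e => Cg₂ (e 1) (e 2)
    | 3, e => Hb 2 e * CX (e 3) (e 4) + CS (e 1) (e 2) (e 3) (e 4)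
    | 4, e =>
        Hb 3 e * CX (e 5) (e 6) + Hb 2 e * CR (e 3) (e 4) (e 5) (e 6)
          + Cg₂ (e 1) (e 2) * CN (e 3) (e 4) (e 5) (e 6)
    | m + 5, e =>
        Hb (m + 4) e * CX (e (2 * m + 7)) (e (2 * m + 8))
          + if (m + 5) % 2 = 1 then
              Hb (m + 3) e * CRt (e (2 * m + 5)) (e (2 * m + 6)) (e (2 * m + 7)) (e (2 * m + 8))
                + BTb (m + 3) e * CNt (e (2 * m + 5)) (e (2 * m + 6)) (e (2 * m + 7)) (e (2 * m + 8))
            else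
              Hb (m + 3) e * CR (e (2 * m + 5)) (e (2 * m + 6)) (e (2 * m + 7)) (e (2 * m + 8))
                + BTb (m + 3) e * CN (e (2 * m + 5)) (e (2 * m + 6)) (e (2 * m + 7)) (e (2 * m + 8))
  termination_by n _ => n
end

section LinearRecurrence

variable {S : Type*} [CommSemiring S]

theorem eq_prod_add_sum_of_linear_recurrence {F P N : ℕ → S}
    (h : ∀ k, F (k + 1) = P k + F k * N k) (k : ℕ) :
    F k = F 0 * ∏ m ∈ range k, N m + ∑ j ∈ range k, P j * ∏ m ∈ Ico (j + 1) k, N m := by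
  induction k with
  | zero => simp
  | succ k ih =>
    have hterm : ∀ j ∈ range k,
        P j * ∏ m ∈ Ico (j + 1) (k + 1), N m = (P j * ∏ m ∈ Ico (j + 1) k, N m) * N k := by
      intro j hj
      rw [prod_Ico_succ_top (mem_range.mp hj), mul_assoc]
    rw [h, ih, prod_range_succ, sum_range_succ, sum_congr rfl hterm, ← sum_mul, Ico_self,
      prod_empty]
    ring

theorem sum_mul_prod_Ico_reflect (P N : ℕ → S) (k : ℕ) :
    ∑ j ∈ range k, P j * ∏ m ∈ Ico (j + 1) k, N m
      = ∑ i ∈ range k, P (k - 1 - i) * ∏ m ∈ range i, N (k - i + m) := by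
  rw [← sum_range_reflect]
  refine sum_congr rfl fun i hi => ?_
  have hik : i < k := mem_range.mp hi
  rw [prod_Ico_eq_prod_range, show k - 1 - i + 1 = k - i by omega,
    show k - (k - i) = i by omega]

end LinearRecurrence

/-- The factor by which `BT (2k+2)` enters `BT (2k+4)`: the coefficient `N` on the `k`-th block of
four crossings `e (4k+3), …, e (4k+6)`. -/
def blockN (e : ℕ → ℤ) (k : ℕ) : KR :=
  CN (e (4 * k + 3)) (e (4 * k + 4)) (e (4 * k + 5)) (e (4 * k + 6))

/-- The contribution of `H (2k+3)` to `BT (2k+4)`; `X` sees the last two crossings of the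
`k`-th block. -/
def blockX (e : ℕ → ℤ) (k : ℕ) : KR :=
  Hb (2 * k + 3) e * CX (e (4 * k + 5)) (e (4 * k + 6))

/-- The contribution of `H (2k+2)` to `BT (2k+4)`; `R` sees all four crossings of the
`k`-th block. -/
def blockR (e : ℕ → ℤ) (k : ℕ) : KR :=
  Hb (2 * k + 2) e * CR (e (4 * k + 3)) (e (4 * k + 4)) (e (4 * k + 5)) (e (4 * k + 6))

theorem BTb_two (e : ℕ → ℤ) : BTb 2 e = Cg₂ (e 1) (e 2) := by
  rw [BTb]

theorem BTb_even_succ (e : ℕ → ℤ) (k : ℕ) :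
    BTb (2 * (k + 1) + 2) e = (blockX e k + blockR e k) + BTb (2 * k + 2) e * blockN e k := by
  unfold blockX blockR blockN
  cases k with
  | zero => simp only [BTb, zero_add, mul_zero, mul_one, Nat.reduceAdd]
  | succ j =>
    rw [show 2 * (j + 1 + 1) + 2 = (2 * j + 1) + 5 by ring, BTb, if_neg (by omega), ← add_assoc]
    ring_nf

theorem BTb_even_eq_sum_blocks (e : ℕ → ℤ) (k : ℕ) :
    BTb (2 * k + 2) e = Cg₂ (e 1) (e 2) * ∏ m ∈ range k, blockN e m
      + ∑ i ∈ range k, blockX e (k - 1 - i) * ∏ m ∈ range i, blockN e (k - i + m)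
      + ∑ i ∈ range k, blockR e (k - 1 - i) * ∏ m ∈ range i, blockN e (k - i + m) := by
  have hsolution := eq_prod_add_sum_of_linear_recurrence (F := fun k => BTb (2 * k + 2) e)
    (BTb_even_succ e) k
  simp only [add_mul, sum_add_distrib, ← add_assoc, sum_mul_prod_Ico_reflect] at hsolution
  rw [hsolution, mul_zero, zero_add, BTb_two]

section Reindexing

-- The bounds on `i` keep every truncated subtraction below exact.

variable {n k i : ℕ} (e : ℕ → ℤ)

theorem blockX_reflect (hn : n = 2 * k + 2) (hi : i < k) :
    blockX e (k - 1 - i) =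
      Hb (n - 1 - 2 * i) e * CX (e (2 * n - 3 - 4 * i)) (e (2 * n - 2 - 4 * i)) := by
  grind [blockX]

theorem blockR_reflect (hn : n = 2 * k + 2) (hi : i < k) :
    blockR e (k - 1 - i) =
      Hb (n - 2 - 2 * i) e *
        CR (e (2 * n - 5 - 4 * i)) (e (2 * n - 4 - 4 * i)) (e (2 * n - 3 - 4 * i))
          (e (2 * n - 2 - 4 * i)) := by
  grind [blockR]

theorem blockN_reflect (hn : n = 2 * k + 2) (hi : i ≤ k) (m : ℕ) :
    blockN e (k - i + m) =
      CN (e (2 * n - 1 - 4 * i + 4 * m)) (e (2 * n - 4 * i + 4 * m))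
        (e (2 * n + 1 - 4 * i + 4 * m)) (e (2 * n + 2 - 4 * i + 4 * m)) := by
  grind [blockN]

end Reindexing

theorem bumpered_B1_closed_form_even_general (n : ℕ) (hn : 2 ≤ n) (heven : n % 2 = 0)
    (e : ℕ → ℤ) :
    BTb n e =
      Cg₂ (e 1) (e 2) *
          ∏ m ∈ Finset.range ((n - 2) / 2),
            CN (e (4 * m + 3)) (e (4 * m + 4)) (e (4 * m + 5)) (e (4 * m + 6))
        + (∑ i ∈ Finset.range ((n - 2) / 2),
            Hb (n - 1 - 2 * i) e * CX (e (2 * n - 3 - 4 * i)) (e (2 * n - 2 - 4 * i)) *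
              ∏ m ∈ Finset.range i,
                CN (e (2 * n - 1 - 4 * i + 4 * m)) (e (2 * n - 4 * i + 4 * m))
                  (e (2 * n + 1 - 4 * i + 4 * m)) (e (2 * n + 2 - 4 * i + 4 * m)))
        + ∑ i ∈ Finset.range ((n - 2) / 2),
            Hb (n - 2 - 2 * i) e *
                CR (e (2 * n - 5 - 4 * i)) (e (2 * n - 4 - 4 * i)) (e (2 * n - 3 - 4 * i))
                  (e (2 * n - 2 - 4 * i)) *
              ∏ m ∈ Finset.range i,
                CN (e (2 * n - 1 - 4 * i + 4 * m)) (e (2 * n - 4 * i + 4 * m))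
                  (e (2 * n + 1 - 4 * i + 4 * m)) (e (2 * n + 2 - 4 * i + 4 * m)) := by
  obtain ⟨k, hk⟩ : ∃ k, n = 2 * k + 2 := ⟨(n - 2) / 2, by omega⟩
  have hblocks := BTb_even_eq_sum_blocks e k
  rw [← hk] at hblocks
  rw [hblocks, show (n - 2) / 2 = k by omega]
  refine congrArg₂ (· + ·) (congrArg (_ + ·) (sum_congr rfl fun i hi => ?_))
    (sum_congr rfl fun i hi => ?_) <;> rw [mem_range] at hi
  · simp only [blockX_reflect e hk hi, blockN_reflect e hk hi.le]
  · simp only [blockR_reflect e hk hi, blockN_reflect e hk hi.le]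

/-- Closed form for the Kauffman bracket of the bumpered billiard tables `B1(5,n)`,
even case. -/
theorem bumpered_B1_closed_form_even (n : ℕ) (hn : 4 ≤ n) (heven : n % 2 = 0)
    (e : ℕ → ℤ) (he : ∀ i, e i = 1 ∨ e i = -1) :
    BTb n e =
      Cg₂ (e 1) (e 2) *
          ∏ m ∈ Finset.range ((n - 2) / 2),
            CN (e (4 * m + 3)) (e (4 * m + 4)) (e (4 * m + 5)) (e (4 * m + 6))
        + (∑ i ∈ Finset.range ((n - 4) / 2 + 1),
            Hb (n - 1 - 2 * i) e * CX (e (2 * n - 3 - 4 * i)) (e (2 * n - 2 - 4 * i)) *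
              ∏ m ∈ Finset.range i,
                CN (e (2 * n - 1 - 4 * i + 4 * m)) (e (2 * n - 4 * i + 4 * m))
                  (e (2 * n + 1 - 4 * i + 4 * m)) (e (2 * n + 2 - 4 * i + 4 * m)))
        + ∑ i ∈ Finset.range ((n - 4) / 2 + 1),
            Hb (n - 2 - 2 * i) e *
                CR (e (2 * n - 5 - 4 * i)) (e (2 * n - 4 - 4 * i)) (e (2 * n - 3 - 4 * i))
                  (e (2 * n - 2 - 4 * i)) *
              ∏ m ∈ Finset.range i,
                CN (e (2 * n - 1 - 4 * i + 4 * m)) (e (2 * n - 4 * i + 4 * m))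
                  (e (2 * n + 1 - 4 * i + 4 * m)) (e (2 * n + 2 - 4 * i + 4 * m)) := by
  have hrange : (n - 4) / 2 + 1 = (n - 2) / 2 := by omega
  simpa only [hrange] using bumpered_B1_closed_form_even_general n (by omega) heven e

end
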